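/- Satisfiability of SHIN⁺-concepts with respect to role hierarchies is undecidable: over a countable effectively encoded signature, there is no computable function f such that, for every SHIN⁺-concept C and every finite set R of role inclusion axioms, f(C, R) = true if and only if C is satisfiable with respect to R⁺. -/

import Mathlib

/-- SHIQ-roles: role names (indexed by ℕ) and their inverses. -/
inductive Role where
  | atom : ℕ → Role
  | inv  : ℕ → Role
deriving DecidableEq

/-- The function `Inv` on roles: `Inv(R) = R⁻`, `Inv(R⁻) = R`. -/
def Role.Inv : Role → Role
  | .atom r => .inv r
  | .inv r  => .atom r

/-- The underlying role name of a (possibly inverse) role. -/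
def Role.name : Role → ℕ
  | .atom r => r
  | .inv r  => r

/-- Concepts of the SHIQ family (with ⊤ and ⊥ for convenience). -/
inductive DLConcept where
  | top : DLConcept
  | bot : DLConcept
  | atom : ℕ → DLConcept
  | neg : DLConcept → DLConcept
  | and : DLConcept → DLConcept → DLConcept
  | or : DLConcept → DLConcept → DLConcept
  | all : Role → DLConcept → DLConcept
  | ex : Role → DLConcept → DLConcept
  | atleast : ℕ → Role → DLConcept → DLConcept
  | atmost : ℕ → Role → DLConcept → DLConcept
deriving DecidableEq

/-- An interpretation: a (nonempty) domain, a valuation of concept names and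
    of role names. -/
structure Interp where
  Dom : Type
  dom_nonempty : Nonempty Dom
  cI : ℕ → Set Dom
  rI : ℕ → Dom → Dom → Prop

/-- Semantics of (possibly inverse) roles. -/
def Interp.rSem (I : Interp) : Role → I.Dom → I.Dom → Prop
  | .atom r => I.rI r
  | .inv r  => fun x y => I.rI r y x

/-- Semantics of concepts; number restrictions are interpreted by counting
    role successors (via cardinalities, so that infinite sets are handled
    correctly). -/
def Interp.cSem (I : Interp) : DLConcept → Set I.Dom
  | .top => Set.univ
  | .bot => ∅
  | .atom a => I.cI a
  | .neg C => (I.cSem C)ᶜ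
  | .and C D => I.cSem C ∩ I.cSem D
  | .or C D => I.cSem C ∪ I.cSem D
  | .all R C => {x | ∀ y, I.rSem R x y → y ∈ I.cSem C}
  | .ex R C => {x | ∃ y, I.rSem R x y ∧ y ∈ I.cSem C}
  | .atleast n R C => {x | (n : Cardinal) ≤ Cardinal.mk {y // I.rSem R x y ∧ y ∈ I.cSem C}}
  | .atmost n R C => {x | Cardinal.mk {y // I.rSem R x y ∧ y ∈ I.cSem C} ≤ (n : Cardinal)}

/-- `I.Good Rp`: the interpretation interprets every transitive role name
    (member of `Rp`) by a transitive relation. -/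
def Interp.Good (I : Interp) (Rp : Set ℕ) : Prop :=
  ∀ r ∈ Rp, Transitive (I.rI r)

/-- The role hierarchy ⊑* generated by a finite set of role inclusion axioms:
    inverses are added and the transitive-reflexive closure is taken. -/
def SubRole (RIA : List (Role × Role)) : Role → Role → Prop :=
  Relation.ReflTransGen (fun R S => (R, S) ∈ RIA ∨ (R.Inv, S.Inv) ∈ RIA)

/-- `I ⊨ R⁺`: the interpretation satisfies the role hierarchy. -/
def Interp.ModelsRH (I : Interp) (RIA : List (Role × Role)) : Prop :=
  ∀ R S, SubRole RIA R S → ∀ x y, I.rSem R x y → I.rSem S x y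

/-- `Trans(R)`: a (possibly inverse) role is transitive iff its name is in `Rp`. -/
def RTrans (Rp : Set ℕ) : Role → Prop
  | .atom r => r ∈ Rp
  | .inv r  => r ∈ Rp

/-- A role is simple iff it is neither transitive nor has a transitive sub-role. -/
def SimpleRole (Rp : Set ℕ) (RIA : List (Role × Role)) (R : Role) : Prop :=
  ∀ S, SubRole RIA S R → ¬ RTrans Rp S

/-- SHIQ-concepts: number restrictions occur only on simple roles. -/
def DLConcept.IsSHIQ (Rp : Set ℕ) (RIA : List (Role × Role)) : DLConcept → Prop
  | .top | .bot | .atom _ => True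
  | .neg C => C.IsSHIQ Rp RIA
  | .and C D | .or C D => C.IsSHIQ Rp RIA ∧ D.IsSHIQ Rp RIA
  | .all _ C | .ex _ C => C.IsSHIQ Rp RIA
  | .atleast _ R C | .atmost _ R C => SimpleRole Rp RIA R ∧ C.IsSHIQ Rp RIA

/-- Satisfiability of a concept w.r.t. a role hierarchy. -/
def Satisfiable (Rp : Set ℕ) (RIA : List (Role × Role)) (C : DLConcept) : Prop :=
  ∃ I : Interp, I.Good Rp ∧ I.ModelsRH RIA ∧ (I.cSem C).Nonempty

/-- Subsumption of concepts w.r.t. a role hierarchy. -/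
def Subsumes (Rp : Set ℕ) (RIA : List (Role × Role)) (C D : DLConcept) : Prop :=
  ∀ I : Interp, I.Good Rp → I.ModelsRH RIA → I.cSem C ⊆ I.cSem D

/-- An effective encoding of roles. -/
def Role.code : Role → ℕ
  | .atom n => 2 * n
  | .inv n => 2 * n + 1

/-- An effective encoding of concepts. -/
def DLConcept.code : DLConcept → ℕ
  | .top => Nat.pair 0 0
  | .bot => Nat.pair 1 0
  | .atom a => Nat.pair 2 a
  | .neg C => Nat.pair 3 C.code
  | .and C D => Nat.pair 4 (Nat.pair C.code D.code)
  | .or C D => Nat.pair 5 (Nat.pair C.code D.code)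
  | .all R C => Nat.pair 6 (Nat.pair R.code C.code)
  | .ex R C => Nat.pair 7 (Nat.pair R.code C.code)
  | .atleast n R C => Nat.pair 8 (Nat.pair n (Nat.pair R.code C.code))
  | .atmost n R C => Nat.pair 9 (Nat.pair n (Nat.pair R.code C.code))

/-- An effective encoding of lists of naturals. -/
def natListCode : List ℕ → ℕ
  | [] => 0
  | a :: l => Nat.pair a (natListCode l) + 1

/-- An effective encoding of finite sets of role inclusion axioms. -/
def riaCode (RIA : List (Role × Role)) : ℕ :=
  natListCode (RIA.map fun p => Nat.pair p.1.code p.2.code)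

/-- The fixed set of transitive role names: the even role names (so that both the
transitive role names and the other role names form countably infinite,
effectively decidable sets). -/
def evenRp : Set ℕ := {n | n % 2 = 0}

/-- SHIN⁺-concepts: number restrictions are unqualified (the qualifying concept is
`⊤`) but may use ARBITRARY (possibly transitive, possibly inverse) roles. -/
def DLConcept.IsSHINplus : DLConcept → Prop
  | .top | .bot | .atom _ => True
  | .neg C => C.IsSHINplus
  | .and C D | .or C D => C.IsSHINplus ∧ D.IsSHINplus
  | .all _ C | .ex _ C => C.IsSHINplus
  | .atleast _ _ C | .atmost _ _ C => C = DLConcept.top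

/-! ### Horn programs over vectors of naturals -/

abbrev Vec := Fin 12 → ℕ

def bump (d : Fin 12) (v : Vec) : Vec := Function.update v d (v d + 1)

inductive HRule where
  | init : ℕ → HRule
  | and : ℕ → ℕ → ℕ → HRule
  | up : Fin 12 → ℕ → ℕ → HRule
  | down : Fin 12 → ℕ → ℕ → HRule

def HRule.Sat (M : ℕ → Set Vec) : HRule → Prop
  | .init c => (0 : Vec) ∈ M c
  | .and a b c => ∀ v, v ∈ M a → v ∈ M b → v ∈ M c
  | .up d a c => ∀ v, v ∈ M a → bump d v ∈ M c
  | .down d a c => ∀ v, bump d v ∈ M a → v ∈ M c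

def HRule.ren (f : ℕ → ℕ) : HRule → HRule
  | .init c => .init (f c)
  | .and a b c => .and (f a) (f b) (f c)
  | .up d a c => .up d (f a) (f c)
  | .down d a c => .down d (f a) (f c)

def HSat (M : ℕ → Set Vec) (P : List HRule) : Prop := ∀ r ∈ P, r.Sat M

theorem HRule.sat_ren (M : ℕ → Set Vec) (f : ℕ → ℕ) (r : HRule) :
    (r.ren f).Sat M ↔ r.Sat (fun n => M (f n)) := by
  cases r <;> rfl

theorem HSat_ren (M : ℕ → Set Vec) (f : ℕ → ℕ) (P : List HRule) :
    HSat M (P.map (HRule.ren f)) ↔ HSat (fun n => M (f n)) P := by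
  simp [HSat, HRule.sat_ren]

theorem HSat_append (M : ℕ → Set Vec) (P Q : List HRule) :
    HSat M (P ++ Q) ↔ HSat M P ∧ HSat M Q := by
  simp only [HSat, List.mem_append]
  constructor
  · intro h; exact ⟨fun r hr => h r (Or.inl hr), fun r hr => h r (Or.inr hr)⟩
  · rintro ⟨h1, h2⟩ r (hr | hr)
    · exact h1 r hr
    · exact h2 r hr

/-- Horn-definable operators: name `0` is the input and name `1` the output. -/
def OpDef (F : Set Vec → Set Vec) : Prop :=
  ∃ P : List HRule, (∀ M, HSat M P → F (M 0) ⊆ M 1) ∧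
    ∀ X, ∃ M, HSat M P ∧ M 0 = X ∧ M 1 = F X

def Def (R : Set Vec) : Prop := OpDef (fun _ => R)

def renA : ℕ → ℕ
  | 0 => 0
  | n+1 => 2*n+2

def renB : ℕ → ℕ
  | 0 => 0
  | n+1 => 2*n+3

theorem OpDef.merge {F G : Set Vec → Set Vec} (hF : OpDef F) (hG : OpDef G) :
    ∃ P : List HRule, (∀ M, HSat M P → F (M 0) ⊆ M 2 ∧ G (M 0) ⊆ M 3) ∧
      ∀ X Y, ∃ M, HSat M P ∧ M 0 = X ∧ M 1 = Y ∧ M 2 = F X ∧ M 3 = G X := by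
  obtain ⟨P, hP, hP'⟩ := hF
  obtain ⟨Q, hQ, hQ'⟩ := hG
  refine ⟨P.map (HRule.ren renA) ++ Q.map (HRule.ren renB), ?_, ?_⟩
  · intro M hM
    rw [HSat_append, HSat_ren, HSat_ren] at hM
    exact ⟨hP _ hM.1, hQ _ hM.2⟩
  · intro X Y
    obtain ⟨M, hM, hM0, hM1⟩ := hP' X
    obtain ⟨N, hN, hN0, hN1⟩ := hQ' X
    let T : ℕ → Set Vec := fun n =>
      if n = 0 then X else if n = 1 then Y else
        if n % 2 = 0 then M (n / 2) else N (n / 2)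
    have hTA : (fun n => T (renA n)) = M := by
      funext n
      cases n with
      | zero => simp [T, renA, hM0]
      | succ n =>
        have h1 : (2 * n + 2) % 2 = 0 := by omega
        have h2 : (2 * n + 2) / 2 = n + 1 := by omega
        simp [T, renA]
    have hTB : (fun n => T (renB n)) = N := by
      funext n
      cases n with
      | zero => simp [T, renB, hN0]
      | succ n =>
        have h1 : ¬ ((2 * n + 3) % 2 = 0) := by omega
        have h2 : (2 * n + 3) / 2 = n + 1 := by omega
        simp only [T, renB, h1, h2]
        simp
    refine ⟨T, ?_, ?_, ?_, ?_, ?_⟩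
    · rw [HSat_append, HSat_ren, HSat_ren, hTA, hTB]
      exact ⟨hM, hN⟩
    · simp [T]
    · simp [T]
    · simpa [T] using hM1
    · simpa [T] using hN1

theorem OpDef.id : OpDef (fun X => X) := by
  refine ⟨[.and 0 0 1], ?_, ?_⟩
  · intro M hM v hv
    exact hM (.and 0 0 1) (by simp) v hv hv
  · intro X
    refine ⟨fun _ => X, ?_, rfl, rfl⟩
    intro r hr
    simp at hr; subst hr
    intro v h _; exact h

theorem OpDef.inter {F G : Set Vec → Set Vec} (hF : OpDef F) (hG : OpDef G) :
    OpDef (fun X => {v | v ∈ F X ∧ v ∈ G X}) := by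
  obtain ⟨P, h1, h2⟩ := OpDef.merge hF hG
  refine ⟨P ++ [.and 2 3 1], ?_, ?_⟩
  · intro M hM v hv
    rw [HSat_append] at hM
    obtain ⟨ha, hb⟩ := h1 M hM.1
    exact hM.2 (.and 2 3 1) (by simp) v (ha hv.1) (hb hv.2)
  · intro X
    obtain ⟨M, hM, e0, e1, e2, e3⟩ := h2 X {v | v ∈ F X ∧ v ∈ G X}
    refine ⟨M, ?_, e0, e1⟩
    rw [HSat_append]
    refine ⟨hM, ?_⟩
    intro r hr
    simp at hr; subst hr
    intro v
    rw [e1, e2, e3]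
    intro a b; exact ⟨a, b⟩

theorem OpDef.union {F G : Set Vec → Set Vec} (hF : OpDef F) (hG : OpDef G) :
    OpDef (fun X => {v | v ∈ F X ∨ v ∈ G X}) := by
  obtain ⟨P, h1, h2⟩ := OpDef.merge hF hG
  refine ⟨P ++ [.and 2 2 1, .and 3 3 1], ?_, ?_⟩
  · intro M hM v hv
    rw [HSat_append] at hM
    obtain ⟨ha, hb⟩ := h1 M hM.1
    rcases hv with hv | hv
    · exact hM.2 (.and 2 2 1) (by simp) v (ha hv) (ha hv)
    · exact hM.2 (.and 3 3 1) (by simp) v (hb hv) (hb hv)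
  · intro X
    obtain ⟨M, hM, e0, e1, e2, e3⟩ := h2 X {v | v ∈ F X ∨ v ∈ G X}
    refine ⟨M, ?_, e0, e1⟩
    rw [HSat_append]
    refine ⟨hM, ?_⟩
    intro r hr
    simp at hr
    rcases hr with rfl | rfl
    · intro v; rw [e1, e2]; intro a _; exact Or.inl a
    · intro v; rw [e1, e3]; intro a _; exact Or.inr a

theorem OpDef.up {F : Set Vec → Set Vec} (d : Fin 12) (hF : OpDef F) :
    OpDef (fun X => {v | ∃ u ∈ F X, bump d u = v}) := by
  obtain ⟨P, h1, h2⟩ := OpDef.merge hF hF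
  refine ⟨P ++ [.up d 2 1], ?_, ?_⟩
  · rintro M hM v ⟨u, hu, rfl⟩
    rw [HSat_append] at hM
    obtain ⟨ha, hb⟩ := h1 M hM.1
    exact hM.2 (.up d 2 1) (by simp) u (ha hu)
  · intro X
    obtain ⟨M, hM, e0, e1, e2, e3⟩ := h2 X {v | ∃ u ∈ F X, bump d u = v}
    refine ⟨M, ?_, e0, e1⟩
    rw [HSat_append]
    refine ⟨hM, ?_⟩
    intro r hr
    simp at hr; subst hr
    intro v
    rw [e1, e2]
    intro a; exact ⟨v, a, rfl⟩

theorem bump_update (d : Fin 12) (v : Vec) (n : ℕ) :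
    bump d (Function.update v d n) = Function.update v d (n+1) := by
  simp [bump]

theorem OpDef.ex {F : Set Vec → Set Vec} (d : Fin 12) (hF : OpDef F) :
    OpDef (fun X => {v | ∃ n, Function.update v d n ∈ F X}) := by
  obtain ⟨P, h1, h2⟩ := OpDef.merge hF hF
  refine ⟨P ++ [.and 2 2 1, .up d 1 1, .down d 1 1], ?_, ?_⟩
  · rintro M hM v ⟨n, hn⟩
    rw [HSat_append] at hM
    obtain ⟨ha, hb⟩ := h1 M hM.1
    have r1 := hM.2 (.and 2 2 1) (by simp)
    have r2 := hM.2 (.up d 1 1) (by simp)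
    have r3 := hM.2 (.down d 1 1) (by simp)
    have hn1 : Function.update v d n ∈ M 1 := r1 _ (ha hn) (ha hn)
    have hz : Function.update v d 0 ∈ M 1 := by
      clear hn
      induction n with
      | zero => exact hn1
      | succ n ih => exact ih (r3 _ (by rw [bump_update]; exact hn1))
    have hall : ∀ m, Function.update v d m ∈ M 1 := by
      intro m
      induction m with
      | zero => exact hz
      | succ m ih => rw [← bump_update]; exact r2 _ ih
    have := hall (v d)
    rwa [Function.update_eq_self] at this
  · intro X
    obtain ⟨M, hM, e0, e1, e2, e3⟩ := h2 X {v | ∃ n, Function.update v d n ∈ F X}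
    refine ⟨M, ?_, e0, e1⟩
    rw [HSat_append]
    refine ⟨hM, ?_⟩
    intro r hr
    simp at hr
    rcases hr with rfl | rfl | rfl
    · intro v; rw [e1, e2]; intro a _
      exact ⟨v d, by rwa [Function.update_eq_self]⟩
    · intro v; rw [e1]
      rintro ⟨n, hn⟩
      exact ⟨n, by simpa [bump] using hn⟩
    · intro v; rw [e1]
      rintro ⟨n, hn⟩
      exact ⟨n, by simpa [bump] using hn⟩

def shift2 (X Y : Set Vec) (M : ℕ → Set Vec) : ℕ → Set Vec
  | 0 => X
  | 1 => Y
  | n+2 => M n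

theorem OpDef.const {R : Set Vec} (h : Def R) : OpDef (fun _ => R) := h

theorem OpDef.fix {F : Set Vec → Set Vec} (hF : OpDef F) (R : Set Vec)
    (hR : F R ⊆ R) (hl : ∀ X, F X ⊆ X → R ⊆ X) : Def R := by
  obtain ⟨P, h1, h2⟩ := hF
  refine ⟨(P ++ [HRule.and 1 1 0]).map (HRule.ren (fun n => n+2)) ++ [.and 2 2 1], ?_, ?_⟩
  · intro M hM v hv
    rw [HSat_append, HSat_ren, HSat_append] at hM
    obtain ⟨⟨ha, hb⟩, hc⟩ := hM
    have := h1 _ ha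
    have hv2 : v ∈ M 2 := by
      refine hl (M 2) ?_ hv
      intro w hw
      exact hb (.and 1 1 0) (by simp) w (this hw) (this hw)
    exact hc (.and 2 2 1) (by simp) v hv2 hv2
  · intro X
    obtain ⟨M, hM, e0, e1⟩ := h2 R
    refine ⟨shift2 X R M, ?_, rfl, rfl⟩
    rw [HSat_append, HSat_ren, HSat_append]
    refine ⟨⟨hM, ?_⟩, ?_⟩
    · intro r hr
      simp at hr; subst hr
      intro v hv _
      change v ∈ M 1 at hv
      change v ∈ M 0
      rw [e1] at hv; rw [e0]; exact hR hv
    · intro r hr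
      simp at hr; subst hr
      intro v hv _
      change v ∈ M 0 at hv
      rw [e0] at hv; exact hv

theorem def_zero : Def {0} := by
  refine ⟨[.init 1], ?_, ?_⟩
  · rintro M hM v rfl
    exact hM (.init 1) (by simp)
  · intro X
    refine ⟨shift2 X {0} (fun _ => ∅), ?_, rfl, rfl⟩
    intro r hr
    simp at hr; subst hr
    exact rfl

theorem Def.inter {R S : Set Vec} (hR : Def R) (hS : Def S) :
    Def {v | v ∈ R ∧ v ∈ S} := OpDef.inter hR hS

theorem Def.up {R : Set Vec} (d : Fin 12) (hR : Def R) :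
    Def {v | ∃ u ∈ R, bump d u = v} := OpDef.up d hR

theorem Def.ex {R : Set Vec} (d : Fin 12) (hR : Def R) :
    Def {v | ∃ n, Function.update v d n ∈ R} := OpDef.ex d hR

theorem Def.of_eq {R S : Set Vec} (hR : Def R) (h : ∀ v, v ∈ S ↔ v ∈ R) : Def S := by
  have : S = R := Set.ext h
  rwa [this]

theorem Def.exL {R : Set Vec} (L : List (Fin 12)) (hR : Def R) :
    Def {v | ∃ u ∈ R, ∀ e, e ∉ L → u e = v e} := by
  induction L with
  | nil =>
    refine hR.of_eq fun v => ?_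
    constructor
    · rintro ⟨u, hu, h⟩
      have : u = v := funext fun e => h e (by simp)
      rwa [← this]
    · intro h; exact ⟨v, h, fun _ _ => rfl⟩
  | cons d L ih =>
    refine (ih.ex d).of_eq fun v => ?_
    constructor
    · rintro ⟨u, hu, h⟩
      refine ⟨u d, u, hu, fun e he => ?_⟩
      by_cases hed : e = d
      · subst hed; simp
      · rw [Function.update_of_ne hed]; exact h e (by simp [hed, he])
    · rintro ⟨n, u, hu, h⟩
      refine ⟨u, hu, fun e he => ?_⟩
      simp at he
      rw [h e he.2, Function.update_of_ne he.1]

theorem def_Z (d : Fin 12) : Def {v | v d = 0} := by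
  refine (def_zero.exL ((List.finRange 12).filter (· ≠ d))).of_eq fun v => ?_
  constructor
  · intro h
    refine ⟨0, rfl, fun e he => ?_⟩
    simp at he
    subst he; exact h.symm
  · rintro ⟨u, rfl, h⟩
    exact (h d (by simp)).symm

theorem def_univ : Def {v | True} := by
  refine ((def_Z 0).ex 0).of_eq fun _ => ?_
  simp

theorem def_NZ (d : Fin 12) : Def {v | v d ≠ 0} := by
  refine (def_univ.up d).of_eq fun v => ?_
  constructor
  · intro h
    simp at h
    refine ⟨Function.update v d (v d - 1), trivial, ?_⟩
    rw [bump_update, Nat.sub_add_cancel (by omega), Function.update_eq_self]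
  · rintro ⟨u, _, rfl⟩
    simp [bump]

theorem bump_pred {d : Fin 12} {v : Vec} (h : v d ≠ 0) :
    bump d (Function.update v d (v d - 1)) = v := by
  rw [bump_update, Nat.sub_add_cancel (by omega), Function.update_eq_self]

theorem bump_same (d : Fin 12) (v : Vec) : bump d v d = v d + 1 := by simp [bump]

theorem bump_ne {d e : Fin 12} (h : e ≠ d) (v : Vec) : bump d v e = v e := by
  simp [bump, Function.update_of_ne h]

theorem def_Eq {d e : Fin 12} (hde : d ≠ e) : Def {v | v d = v e} := by
  have hop : OpDef (fun X => {v | (v ∈ {v | v ∈ {v | v d = 0} ∧ v ∈ {v | v e = 0}}) ∨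
      v ∈ {v | ∃ u ∈ {v | ∃ u ∈ X, bump d u = v}, bump e u = v}}) :=
    OpDef.union ((def_Z d).inter (def_Z e)) ((OpDef.id.up d).up e)
  refine hop.fix _ ?_ ?_
  · rintro v (⟨h1, h2⟩ | ⟨_, ⟨u, hu, rfl⟩, rfl⟩)
    · simp_all
    · simp only [Set.mem_ofPred_eq] at hu ⊢
      simp [bump_same, bump_ne hde, bump_ne hde.symm, hu]
  · intro X hX v hv
    simp only [Set.mem_ofPred_eq] at hv
    generalize hn : v d = n at hv
    induction n generalizing v with
    | zero => exact hX (Or.inl ⟨hn, hv.symm⟩)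
    | succ n ih =>
      refine hX (Or.inr ⟨Function.update v e (v e - 1), ⟨Function.update (Function.update v e (v e - 1)) d n, ?_, ?_⟩, ?_⟩)
      · apply ih
        · simp
        · simp [Function.update_of_ne hde.symm, ← hv]
      · rw [bump_update, ← hn]
        conv_lhs => rw [show v d = Function.update v e (v e - 1) d by rw [Function.update_of_ne hde]]
        rw [Function.update_eq_self]
      · exact bump_pred (by omega)

theorem def_Succ {d e : Fin 12} (hde : d ≠ e) : Def {v | v e = v d + 1} := by
  refine ((def_Eq hde).up e).of_eq fun v => ?_
  constructor
  · intro h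
    simp only [Set.mem_ofPred_eq] at h
    refine ⟨Function.update v e (v e - 1), ?_, bump_pred (by omega)⟩
    simp [Function.update_of_ne hde, h]
  · rintro ⟨u, hu, rfl⟩
    simp only [Set.mem_ofPred_eq] at hu
    simp [bump_same, bump_ne hde, hu]

theorem def_Lt {d e : Fin 12} (hde : d ≠ e) : Def {v | v d < v e} := by
  refine (OpDef.union (def_Succ hde) (OpDef.id.up e)).fix _ ?_ ?_
  · rintro v (h | ⟨u, hu, rfl⟩)
    · simp only [Set.mem_ofPred_eq] at h ⊢; omega
    · simp only [Set.mem_ofPred_eq] at hu ⊢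
      simp [bump_same, bump_ne hde]; omega
  · intro X hX v hv
    simp only [Set.mem_ofPred_eq] at hv
    obtain ⟨n, hn⟩ := Nat.exists_eq_add_of_lt hv
    induction n generalizing v with
    | zero => exact hX (Or.inl (by simpa using hn))
    | succ n ih =>
      refine hX (Or.inr ⟨Function.update v e (v e - 1), ?_, bump_pred (by omega)⟩)
      apply ih
      · simp [Function.update_of_ne hde]; omega
      · simp [Function.update_of_ne hde]; omega

/-! ### Definability of the graphs of partial recursive functions -/

theorem pair_step1 {a b : ℕ} (h : a + 1 < b) : Nat.pair (a+1) b = Nat.pair a b + 1 := by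
  have h' : a < b := by omega
  simp only [Nat.pair, h, h', if_true]; omega

theorem pair_step2 {a : ℕ} : Nat.pair (a+1) 0 = Nat.pair a (a+1) + 1 := by
  have h' : a < a+1 := by omega
  simp only [Nat.pair, h', if_true]
  simp
  ring

theorem pair_step3 {a b : ℕ} (h : b < a) : Nat.pair a (b+1) = Nat.pair a b + 1 := by
  have h1 : ¬ a < b := by omega
  have h2 : ¬ a < b + 1 := by omega
  simp only [Nat.pair, h1, h2, if_false]; omega

theorem pair_step4 {a : ℕ} : Nat.pair 0 (a+1) = Nat.pair a a + 1 := by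
  simp [Nat.pair]
  ring

theorem fresh (L : List (Fin 12)) (h : L.length < 12) : ∃ t, t ∉ L := by
  by_contra hc
  push Not at hc
  have h1 : (Finset.univ : Finset (Fin 12)) ⊆ L.toFinset := by
    intro x _; simpa using hc x
  have h2 := Finset.card_le_card h1
  have h3 := L.toFinset_card_le
  simp at h2
  omega

theorem def_Pair {a b n : Fin 12} (hab : a ≠ b) (han : a ≠ n) (hbn : b ≠ n) :
    Def {v | v n = Nat.pair (v a) (v b)} := by
  have o0 : OpDef (fun _ => {v | v ∈ {v | v n = 0} ∧ v ∈ {v | v ∈ {v | v a = 0} ∧ v ∈ {v | v b = 0}}}) :=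
    OpDef.inter (def_Z n) ((def_Z a).inter (def_Z b))
  have o1 := OpDef.inter ((OpDef.id.up n).up a) (OpDef.const (def_Lt hab))
  have o2 := OpDef.inter ((((OpDef.id.inter (OpDef.const (def_Succ hab))).up a).up n).ex b)
    (OpDef.const (def_Z b))
  have o3 := ((OpDef.id.inter (OpDef.const (def_Lt hab.symm))).up b).up n
  have o4 := OpDef.inter ((((OpDef.id.inter (OpDef.const (def_Eq hab))).up b).up n).ex a)
    (OpDef.const (def_Z a))
  have op := o0.union (o1.union (o2.union (o3.union o4)))
  have hba := hab.symm
  have hna := han.symm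
  have hnb := hbn.symm
  refine op.fix _ ?_ ?_
  · rintro v (⟨h1, h2, h3⟩ | ⟨⟨_, ⟨u, hu, rfl⟩, rfl⟩, h⟩ | ⟨⟨m, _, ⟨u, ⟨hu, hu'⟩, rfl⟩, hm⟩, h⟩ |
      ⟨_, ⟨u, ⟨hu, hu'⟩, rfl⟩, rfl⟩ | ⟨⟨m, _, ⟨u, ⟨hu, hu'⟩, rfl⟩, hm⟩, h⟩)
    · simp only [Set.mem_ofPred_eq] at *
      rw [h1, h2, h3]; rfl
    · simp only [Set.mem_ofPred_eq] at *
      simp [bump_same, bump_ne, *] at h ⊢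
      rw [pair_step1 h]
    · simp only [Set.mem_ofPred_eq] at *
      have e1 := congrFun hm a
      have e2 := congrFun hm n
      simp [bump_same, bump_ne, *] at e1 e2 ⊢
      rw [← e1, ← e2, pair_step2]
    · simp only [Set.mem_ofPred_eq] at *
      simp [bump_same, bump_ne, *]
      rw [pair_step3 hu']
    · simp only [Set.mem_ofPred_eq] at *
      have e1 := congrFun hm b
      have e2 := congrFun hm n
      simp [bump_same, bump_ne, *] at e1 e2 ⊢
      rw [← e1, ← e2, pair_step4]
  · intro X hX v hv
    simp only [Set.mem_ofPred_eq] at hv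
    generalize hm : v n = m at hv
    have key : ∀ (v : Vec) x y m, (∀ (v : Vec), v n = m → m = Nat.pair (v a) (v b) → v ∈ X) →
        m = Nat.pair x y →
        Function.update (Function.update (Function.update v n m) a x) b y ∈ X := by
      intro v x y m h1 h2
      apply h1 <;> simp [*]
    induction m generalizing v with
    | zero =>
      have hp : Nat.unpair 0 = (v a, v b) := by rw [hv, Nat.unpair_pair]
      have h00 : Nat.unpair 0 = (0, 0) := by simp; rfl
      rw [h00] at hp
      have ha : v a = 0 := by simpa using (congrArg Prod.fst hp).symm
      have hb : v b = 0 := by simpa using (congrArg Prod.snd hp).symm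
      exact hX (Or.inl ⟨hm, ha, hb⟩)
    | succ m ih =>
      rcases hva : v a with _ | x <;> rcases hvb : v b with _ | y
      · rw [hva, hvb] at hv
        simp [Nat.pair] at hv
      · have hpm : m = Nat.pair y y := by
          rw [hva, hvb, pair_step4] at hv; omega
        have hk := key v y y m ih hpm
        refine hX (Or.inr (Or.inr (Or.inr (Or.inr ⟨⟨y, _, ⟨_, ⟨hk, ?_⟩, rfl⟩, ?_⟩, hva⟩))))
        · simp [*]
        · clear hk hX op o0 o1 o2 o3 o4 key ih hv
          funext z
          by_cases h1 : z = a <;> by_cases h2 : z = b <;> by_cases h3 : z = n <;>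
            simp_all [bump, Function.update_apply]
      · have hpm : m = Nat.pair x (x+1) := by
          rw [hva, hvb, pair_step2] at hv; omega
        have hk := key v x (x+1) m ih hpm
        refine hX (Or.inr (Or.inr (Or.inl ⟨⟨x+1, _, ⟨_, ⟨hk, ?_⟩, rfl⟩, ?_⟩, hvb⟩)))
        · simp [*]
        · clear hk hX op o0 o1 o2 o3 o4 key ih hv
          funext z
          by_cases h1 : z = a <;> by_cases h2 : z = b <;> by_cases h3 : z = n <;>
            simp_all [bump, Function.update_apply]
      · by_cases hxy : x < y
        · have hpm : m = Nat.pair x (y+1) := by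
            rw [hva, hvb, pair_step1 (by omega)] at hv; omega
          have hk := key v x (y+1) m ih hpm
          refine hX (Or.inr (Or.inl ⟨⟨_, ⟨_, hk, rfl⟩, ?_⟩, ?_⟩))
          · clear hk hX op o0 o1 o2 o3 o4 key ih hv
            funext z
            by_cases h1 : z = a <;> by_cases h2 : z = b <;> by_cases h3 : z = n <;>
              simp_all [bump, Function.update_apply]
          · simp [*]
        · have hpm : m = Nat.pair (x+1) y := by
            rw [hva, hvb, pair_step3 (by omega)] at hv; omega
          have hk := key v (x+1) y m ih hpm
          refine hX (Or.inr (Or.inr (Or.inr (Or.inl ⟨_, ⟨_, ⟨hk, ?_⟩, rfl⟩, ?_⟩))))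
          · simp [*]; omega
          · clear hk hX op o0 o1 o2 o3 o4 key ih hv
            funext z
            by_cases h1 : z = a <;> by_cases h2 : z = b <;> by_cases h3 : z = n <;>
              simp_all [bump, Function.update_apply]

def GraphDef (f : ℕ →. ℕ) : Prop :=
  ∀ d e : Fin 12, d ≠ e → Def {v | v e ∈ f (v d)}

theorem graph_pair {f g : ℕ →. ℕ} (hf : GraphDef f) (hg : GraphDef g) :
    GraphDef (fun n => Nat.pair <$> f n <*> g n) := by
  intro d e hde
  obtain ⟨s, hs⟩ := fresh [d, e] (by simp)
  obtain ⟨t, ht⟩ := fresh [d, e, s] (by simp)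
  simp only [List.mem_cons, List.not_mem_nil, not_or, or_false] at hs ht
  obtain ⟨hs1, hs2⟩ := hs
  obtain ⟨ht1, ht2, ht3⟩ := ht
  refine (((hf d s (Ne.symm hs1)).inter ((hg d t (Ne.symm ht1)).inter
    (def_Pair (Ne.symm ht3) hs2 ht2))).ex s |>.ex t).of_eq fun v => ?_
  simp [Seq.seq, *, Ne.symm hs1, Ne.symm hs2, Ne.symm ht1, Ne.symm ht2, Ne.symm ht3]
  constructor
  · rintro ⟨x, hx, y, hy, h⟩; exact ⟨y, x, hx, hy, h.symm⟩
  · rintro ⟨y, x, hx, hy, h⟩; exact ⟨x, hx, y, hy, h.symm⟩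

theorem graph_comp {f g : ℕ →. ℕ} (hf : GraphDef f) (hg : GraphDef g) :
    GraphDef (fun n => g n >>= f) := by
  intro d e hde
  obtain ⟨s, hs⟩ := fresh [d, e] (by simp)
  simp only [List.mem_cons, List.not_mem_nil, not_or, or_false] at hs
  obtain ⟨hs1, hs2⟩ := hs
  refine (((hg d s (Ne.symm hs1)).inter (hf s e hs2)).ex s).of_eq fun v => ?_
  simp [*, Ne.symm hs1, Ne.symm hs2]
  exact Part.mem_bind_iff

def precRel (f g : ℕ →. ℕ) (a n : ℕ) : Part ℕ :=
  Nat.rec (f a) (fun y IH => do let i ← IH; g (Nat.pair a (Nat.pair y i))) n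

theorem def_prec {f g : ℕ →. ℕ} (hf : GraphDef f) (hg : GraphDef g) {a n i : Fin 12}
    (han : a ≠ n) (hai : a ≠ i) (hni : n ≠ i) : Def {v | v i ∈ precRel f g (v a) (v n)} := by
  obtain ⟨j, hj⟩ := fresh [a, n, i] (by simp)
  obtain ⟨u, hu⟩ := fresh [a, n, i, j] (by simp)
  obtain ⟨w, hw⟩ := fresh [a, n, i, j, u] (by simp)
  simp only [List.mem_cons, List.not_mem_nil, not_or, or_false] at hj hu hw
  obtain ⟨hj1, hj2, hj3⟩ := hj
  obtain ⟨hu1, hu2, hu3, hu4⟩ := hu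
  obtain ⟨hw1, hw2, hw3, hw4, hw5⟩ := hw
  have hW : Def {v | v j ∈ g (Nat.pair (v a) (Nat.pair (v n) (v i)))} := by
    refine (((def_Pair hni (Ne.symm hu2) (Ne.symm hu3)).inter
      ((def_Pair (Ne.symm hu1) (Ne.symm hw1) (Ne.symm hw5)).inter (hg w j hw4))).ex w
        |>.ex u).of_eq fun v => ?_
    simp [*, Ne.symm hu1, Ne.symm hu2, Ne.symm hu3, Ne.symm hu4, Ne.symm hw1, Ne.symm hw2,
      Ne.symm hw3, Ne.symm hw4, Ne.symm hw5]
  have op := OpDef.union (OpDef.const ((def_Z n).inter (hf a i hai)))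
    ((((OpDef.const (def_Eq (Ne.symm hj3))).inter
      ((OpDef.id.inter (OpDef.const hW)).ex i)).ex j).up n)
  refine op.fix _ ?_ ?_
  · rintro v (⟨h1, h2⟩ | ⟨v, ⟨y, h1, x, h2, h3⟩, rfl⟩)
    · simp only [Set.mem_ofPred_eq] at *
      rw [h1]; exact h2
    · simp [*, Ne.symm hj1, Ne.symm hj2, Ne.symm hj3] at h1 h2 h3
      simp [bump_same, bump_ne, *, hni.symm]
      exact Part.mem_bind h2 h3
  · intro X hX v hv
    simp only [Set.mem_ofPred_eq] at hv
    generalize hm : v n = m at hv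
    induction m generalizing v with
    | zero => exact hX (Or.inl ⟨hm, hv⟩)
    | succ m ih =>
      obtain ⟨x, hx, hx'⟩ := Part.mem_bind_iff.1 hv
      refine hX (Or.inr ⟨Function.update v n m, ⟨v i, ?_, x, ?_, ?_⟩, ?_⟩)
      · simp [*, Ne.symm hj3, Ne.symm hni]
      · change x ∈ precRel f g (v a) m at hx
        apply ih
        · simp [*, Ne.symm hj2]
        · simpa [*, Ne.symm hj1] using hx
      · simpa [*, Ne.symm hj1, Ne.symm hj2] using hx'
      · rw [bump_update, ← hm, Function.update_eq_self]

theorem graph_prec {f g : ℕ →. ℕ} (hf : GraphDef f) (hg : GraphDef g) :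
    GraphDef (Nat.unpaired fun a n =>
      n.rec (f a) fun y IH => do let i ← IH; g (Nat.pair a (Nat.pair y i))) := by
  intro d e hde
  obtain ⟨s, hs⟩ := fresh [d, e] (by simp)
  obtain ⟨t, ht⟩ := fresh [d, e, s] (by simp)
  simp only [List.mem_cons, List.not_mem_nil, not_or, or_false] at hs ht
  obtain ⟨hs1, hs2⟩ := hs
  obtain ⟨ht1, ht2, ht3⟩ := ht
  refine (((def_Pair (Ne.symm ht3) hs1 ht1).inter
    (def_prec hf hg (Ne.symm ht3) hs2 ht2)).ex s |>.ex t).of_eq fun v => ?_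
  simp only [Set.mem_ofPred_eq]
  simp [*, Ne.symm hs1, Ne.symm hs2, Ne.symm ht1, Ne.symm ht2, Ne.symm ht3]
  constructor
  · intro h
    exact ⟨(v d).unpair.2, (v d).unpair.1, by simp, h⟩
  · rintro ⟨y, x, hd, h⟩
    rw [hd]
    simp only [Nat.unpaired, Nat.unpair_pair]
    exact h

theorem def_mu {f : ℕ →. ℕ} (hf : GraphDef f) {a n : Fin 12}
    (han : a ≠ n) : Def {v | ∀ m < v n, ∃ z, z ∈ f (Nat.pair (v a) m) ∧ z ≠ 0} := by
  obtain ⟨u, hu⟩ := fresh [a, n] (by simp)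
  obtain ⟨w, hw⟩ := fresh [a, n, u] (by simp)
  simp only [List.mem_cons, List.not_mem_nil, not_or, or_false] at hu hw
  obtain ⟨hu1, hu2⟩ := hu
  obtain ⟨hw1, hw2, hw3⟩ := hw
  have hW : Def {v | ∃ z, z ∈ f (Nat.pair (v a) (v n)) ∧ z ≠ 0} := by
    refine (((def_Pair han (Ne.symm hu1) (Ne.symm hu2)).inter
      ((hf u w (Ne.symm hw3)).inter (def_NZ w))).ex w |>.ex u).of_eq fun v => ?_
    simp [*, Ne.symm hu1, Ne.symm hu2, Ne.symm hw1, Ne.symm hw2, Ne.symm hw3]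
  have op := OpDef.union (OpDef.const (def_Z n))
    ((OpDef.id.inter (OpDef.const hW)).up n)
  refine op.fix _ ?_ ?_
  · rintro v (h | ⟨v, ⟨h1, h2⟩, rfl⟩)
    · simp only [Set.mem_ofPred_eq] at *
      intro m hm; omega
    · simp only [Set.mem_ofPred_eq] at *
      intro m hm
      rw [bump_same] at hm
      rw [bump_ne han]
      rcases Nat.lt_succ_iff_lt_or_eq.1 hm with h | rfl
      · exact h1 m h
      · exact h2
  · intro X hX v hv
    simp only [Set.mem_ofPred_eq] at hv
    generalize hm : v n = m at hv
    induction m generalizing v with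
    | zero => exact hX (Or.inl hm)
    | succ m ih =>
      refine hX (Or.inr ⟨Function.update v n m, ⟨?_, ?_⟩, ?_⟩)
      · apply ih
        · simp
        · intro k hk
          rw [Function.update_of_ne han]
          exact hv k (by omega)
      · simpa [han] using hv m (by omega)
      · rw [bump_update, ← hm, Function.update_eq_self]

theorem graph_rfind {f : ℕ →. ℕ} (hf : GraphDef f) :
    GraphDef (fun a => Nat.rfind fun n => (fun m => decide (m = 0)) <$> f (Nat.pair a n)) := by
  intro d e hde
  obtain ⟨s, hs⟩ := fresh [d, e] (by simp)
  obtain ⟨t, ht⟩ := fresh [d, e, s] (by simp)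
  simp only [List.mem_cons, List.not_mem_nil, not_or, or_false] at hs ht
  obtain ⟨hs1, hs2⟩ := hs
  obtain ⟨ht1, ht2, ht3⟩ := ht
  refine ((def_mu hf hde).inter ((((def_Pair hde (Ne.symm hs1) (Ne.symm hs2)).inter
    ((hf s t (Ne.symm ht3)).inter (def_Z t))).ex s).ex t)).of_eq fun v => ?_
  refine Nat.mem_rfind.trans ?_
  simp [*, Ne.symm hs1, Ne.symm hs2, Ne.symm ht1, Ne.symm ht2, Ne.symm ht3]
  constructor
  · rintro ⟨h1, h2⟩
    exact ⟨h2, h1⟩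
  · rintro ⟨h1, h2⟩
    exact ⟨h2, h1⟩

theorem graph_of_partrec {f : ℕ →. ℕ} (hf : Nat.Partrec f) : GraphDef f := by
  induction hf with
  | zero =>
    intro d e hde
    refine (def_Z e).of_eq fun v => ?_
    simp [pure, PFun.pure]
  | succ =>
    intro d e hde
    refine (def_Succ hde).of_eq fun v => ?_
    simp
  | left =>
    intro d e hde
    obtain ⟨s, hs⟩ := fresh [d, e] (by simp)
    simp only [List.mem_cons, List.not_mem_nil, not_or, or_false] at hs
    obtain ⟨hs1, hs2⟩ := hs
    refine ((def_Pair (Ne.symm hs2) (Ne.symm hde) hs1).ex s).of_eq fun v => ?_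
    simp [*, Ne.symm hs1, Ne.symm hs2]
    constructor
    · intro h; exact ⟨(v d).unpair.2, by rw [h]; simp⟩
    · rintro ⟨n, h⟩; rw [h]; simp
  | right =>
    intro d e hde
    obtain ⟨s, hs⟩ := fresh [d, e] (by simp)
    simp only [List.mem_cons, List.not_mem_nil, not_or, or_false] at hs
    obtain ⟨hs1, hs2⟩ := hs
    refine ((def_Pair hs2 hs1 (Ne.symm hde)).ex s).of_eq fun v => ?_
    simp [*, Ne.symm hs1, Ne.symm hs2]
    constructor
    · intro h; exact ⟨(v d).unpair.1, by rw [h]; simp⟩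
    · rintro ⟨n, h⟩; rw [h]; simp
  | pair _ _ h1 h2 => exact graph_pair h1 h2
  | comp _ _ h1 h2 => exact graph_comp h1 h2
  | prec _ _ h1 h2 => exact graph_prec h1 h2
  | rfind _ h => exact graph_rfind h

/-! ### Encoding Horn programs in SHIN⁺ -/

inductive RN where
  | U : RN
  | X : Fin 12 → Bool → RN
  | S : Fin 12 → Fin 12 → Bool → Bool → RN

def RN.name : RN → ℕ
  | .U => 0
  | .X d i => 2 * Encodable.encode (d, i) + 1
  | .S d e i j => 2 * (Encodable.encode (d, e, i, j) + 1)

theorem RN.name_inj {r s : RN} (h : r.name = s.name) : r = s := by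
  rcases r with _ | ⟨d, i⟩ | ⟨d, e, i, j⟩ <;> rcases s with _ | ⟨d', i'⟩ | ⟨d', e', i', j'⟩ <;>
    simp only [RN.name] at h
  · rfl
  · omega
  · omega
  · omega
  · have h' : Encodable.encode (d, i) = Encodable.encode (d', i') := by omega
    have := Encodable.encode_injective h'
    simp only [Prod.mk.injEq] at this
    obtain ⟨rfl, rfl⟩ := this
    rfl
  · omega
  · omega
  · omega
  · have h' : Encodable.encode (d, e, i, j) = Encodable.encode (d', e', i', j') := by omega
    have := Encodable.encode_injective h'
    simp only [Prod.mk.injEq] at this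
    obtain ⟨rfl, rfl, rfl, rfl⟩ := this
    rfl

def RN.role (r : RN) : Role := .atom r.name

def bigAnd : List DLConcept → DLConcept
  | [] => .top
  | C :: l => .and C (bigAnd l)

theorem mem_bigAnd (I : Interp) (l : List DLConcept) (x : I.Dom) :
    x ∈ I.cSem (bigAnd l) ↔ ∀ C ∈ l, x ∈ I.cSem C := by
  induction l with
  | nil => simp [bigAnd, Interp.cSem]
  | cons C l ih => simp [bigAnd, Interp.cSem, ih]

theorem shin_bigAnd (l : List DLConcept) (h : ∀ C ∈ l, C.IsSHINplus) : (bigAnd l).IsSHINplus := by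
  induction l with
  | nil => trivial
  | cons C l ih =>
    exact ⟨h C (by simp), ih fun D hD => h D (by simp [hD])⟩

def par (d : Fin 12) : ℕ := 2 * d.val
def prd (p : ℕ) : ℕ := 2 * p + 1

def lit (d : Fin 12) : Bool → DLConcept
  | true => .atom (par d)
  | false => .neg (.atom (par d))

def impC (C D : DLConcept) : DLConcept := .or (.neg C) D

theorem mem_impC (I : Interp) (C D : DLConcept) (x : I.Dom) :
    x ∈ I.cSem (impC C D) ↔ (x ∈ I.cSem C → x ∈ I.cSem D) := by
  simp only [impC, Interp.cSem, Set.mem_union, Set.mem_compl_iff]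
  tauto

def flipC (d : Fin 12) (i : Bool) : DLConcept :=
  impC (lit d i) (.ex (RN.X d i).role (lit d (!i)))

def keepC (d e : Fin 12) (i j : Bool) : DLConcept :=
  if d = e then .top else impC (lit e j) (.all (RN.X d i).role (lit e j))

def cntC (d e : Fin 12) (i j : Bool) : DLConcept :=
  if d = e then .top else
    impC (lit d i) (impC (lit e j) (.atmost 3 (RN.S d e i j).role .top))

/-- Value restriction for both versions of the successor role of dimension `d`. -/
def allX (d : Fin 12) (C : DLConcept) : DLConcept :=
  .and (.all (RN.X d false).role C) (.all (RN.X d true).role C)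

def ruleC : HRule → DLConcept
  | .init _ => .top
  | .and a b c => impC (.atom (prd a)) (impC (.atom (prd b)) (.atom (prd c)))
  | .up d a c => impC (.atom (prd a)) (allX d (.atom (prd c)))
  | .down d a c => .or (allX d (.neg (.atom (prd a)))) (.atom (prd c))

def initC : HRule → DLConcept
  | .init c => .atom (prd c)
  | _ => .top

def dims : List (Fin 12) := List.finRange 12
def bools : List Bool := [false, true]

def gridL : List DLConcept :=
  (dims.flatMap fun d => bools.map fun i => flipC d i) ++
  (dims.flatMap fun d => dims.flatMap fun e => bools.flatMap fun i => bools.map fun j =>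
    keepC d e i j) ++
  (dims.flatMap fun d => dims.flatMap fun e => bools.flatMap fun i => bools.map fun j =>
    cntC d e i j)

theorem mem_dims (d : Fin 12) : d ∈ dims := List.mem_finRange d
theorem mem_bools (i : Bool) : i ∈ bools := by cases i <;> simp [bools]

theorem mem_gridL (C : DLConcept) : C ∈ gridL ↔ (∃ d i, flipC d i = C) ∨
    (∃ d e i j, keepC d e i j = C) ∨ (∃ d e i j, cntC d e i j = C) := by
  simp only [gridL, List.mem_append, List.mem_flatMap, List.mem_map, mem_dims, mem_bools,
    true_and, or_assoc]

def tboxC (P : List HRule) : DLConcept := bigAnd (gridL ++ P.map ruleC)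

def ria : List (Role × Role) :=
  (dims.flatMap fun d => bools.map fun i => ((RN.X d i).role, RN.U.role)) ++
  (dims.flatMap fun d => dims.flatMap fun e => bools.flatMap fun i => bools.map fun j =>
    ((RN.X d i).role, (RN.S d e i j).role)) ++
  (dims.flatMap fun d => dims.flatMap fun e => bools.flatMap fun i => bools.map fun j =>
    ((RN.X e j).role, (RN.S d e i j).role))

theorem mem_ria (p : Role × Role) : p ∈ ria ↔ (∃ d i, ((RN.X d i).role, RN.U.role) = p) ∨
    (∃ d e i j, ((RN.X d i).role, (RN.S d e i j).role) = p) ∨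
    (∃ d e i j, ((RN.X e j).role, (RN.S d e i j).role) = p) := by
  simp only [ria, List.mem_append, List.mem_flatMap, List.mem_map, mem_dims, mem_bools,
    true_and, or_assoc]

def fixedC (P : List HRule) : DLConcept :=
  .and (tboxC P) (.and (.all RN.U.role (tboxC P)) (bigAnd (P.map initC)))

/-- The goal predicate (name `1`) fails `n` steps away from the root in dimension `0`. -/
def inputC : ℕ → DLConcept
  | 0 => .neg (.atom (prd 1))
  | n+1 => allX 0 (inputC n)

def redC (P : List HRule) (n : ℕ) : DLConcept := .and (fixedC P) (inputC n)

theorem shin_lit (d : Fin 12) (i : Bool) : (lit d i).IsSHINplus := by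
  cases i <;> trivial

theorem shin_tbox (P : List HRule) : (tboxC P).IsSHINplus := by
  apply shin_bigAnd
  intro C hC
  rw [List.mem_append, mem_gridL, List.mem_map] at hC
  rcases hC with (⟨d, i, rfl⟩ | ⟨d, e, i, j, rfl⟩ | ⟨d, e, i, j, rfl⟩) | ⟨r, _, rfl⟩
  · exact ⟨shin_lit _ _, shin_lit _ _⟩
  · unfold keepC; split_ifs
    · trivial
    · exact ⟨shin_lit _ _, shin_lit _ _⟩
  · unfold cntC; split_ifs
    · trivial
    · exact ⟨shin_lit _ _, shin_lit _ _, rfl⟩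
  · cases r <;> simp [ruleC, impC, allX, DLConcept.IsSHINplus]

theorem shin_input (n : ℕ) : (inputC n).IsSHINplus := by
  induction n with
  | zero => trivial
  | succ n ih => exact ⟨ih, ih⟩

theorem shin_red (P : List HRule) (n : ℕ) : (redC P n).IsSHINplus := by
  refine ⟨⟨shin_tbox P, shin_tbox P, ?_⟩, shin_input n⟩
  apply shin_bigAnd
  intro C hC
  obtain ⟨r, _, rfl⟩ := List.mem_map.1 hC
  cases r <;> trivial

/-! ### From models to Horn models -/

section Extract

theorem lit_iff (I : Interp) (d : Fin 12) (i : Bool) (x : I.Dom) :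
    x ∈ I.cSem (lit d i) ↔ (i = true ↔ x ∈ I.cI (par d)) := by
  cases i <;> simp [lit, Interp.cSem]

theorem grid_of_commute {D : Type} (s : Fin 12 → D → D)
    (hs : ∀ d e x, s d (s e x) = s e (s d x)) (x0 : D) :
    ∃ g : Vec → D, g 0 = x0 ∧ ∀ d v, g (bump d v) = s d (g v) := by
  let ϕ : ∀ _ : Fin 12, Multiplicative ℕ →* Function.End D := fun d =>
    powersHom (Function.End D) (s d)
  have hc : Pairwise fun i j => ∀ x y, Commute (ϕ i x) (ϕ j y) := by
    intro i j _ x y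
    simp only [ϕ, powersHom_apply]
    apply Commute.pow_pow
    exact funext fun z => hs i j z
  let Φ := MonoidHom.noncommPiCoprod ϕ hc
  refine ⟨fun v => Φ (fun d => Multiplicative.ofAdd (v d)) x0, ?_, ?_⟩
  · have : (fun d => Multiplicative.ofAdd ((0 : Vec) d)) = (1 : Fin 12 → Multiplicative ℕ) := rfl
    simp only [this, map_one]
    rfl
  · intro d v
    have : (fun e => Multiplicative.ofAdd (bump d v e)) =
        (Pi.mulSingle d (Multiplicative.ofAdd 1) : Fin 12 → Multiplicative ℕ) *
          (fun e => Multiplicative.ofAdd (v e)) := by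
      funext e
      by_cases h : e = d
      · subst h; simp [bump_same, ofAdd_add, mul_comm]
      · simp [bump_ne h, Pi.mulSingle_eq_of_ne h]
    simp only [this, map_mul]
    have h2 : Φ (Pi.mulSingle d (Multiplicative.ofAdd 1)) = s d := by
      simp only [Φ, MonoidHom.noncommPiCoprod_mulSingle]
      exact pow_one (M := Function.End D) (s d)
    rw [h2]
    rfl

variable (I : Interp) (P : List HRule)

theorem step_exists (hR : I.ModelsRH ria) (d : Fin 12) (p : I.Dom)
    (hT : p ∈ I.cSem (tboxC P)) :
    ∃ q i, I.rI (RN.X d i).name p q ∧ I.rI RN.U.name p q ∧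
      (i = true ↔ p ∈ I.cI (par d)) ∧ (q ∈ I.cI (par d) ↔ p ∉ I.cI (par d)) ∧
      ∀ e, e ≠ d → (q ∈ I.cI (par e) ↔ p ∈ I.cI (par e)) := by
  classical
  have hT' := (mem_bigAnd I _ p).1 hT
  let i : Bool := decide (p ∈ I.cI (par d))
  have hi : i = true ↔ p ∈ I.cI (par d) := by simp [i]
  have h1 := hT' (flipC d i) (List.mem_append_left _ ((mem_gridL _).2 (Or.inl ⟨d, i, rfl⟩)))
  rw [flipC, mem_impC, lit_iff] at h1
  obtain ⟨q, hq, hq'⟩ := h1 hi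
  rw [lit_iff] at hq'
  change I.rI (RN.X d i).name p q at hq
  refine ⟨q, i, hq, ?_, hi, ?_, ?_⟩
  · exact hR _ _ (Relation.ReflTransGen.single (Or.inl ((mem_ria _).2 (Or.inl ⟨d, i, rfl⟩)))) p q hq
  · rw [← hi, ← hq']; simp
  · intro e hed
    let j : Bool := decide (p ∈ I.cI (par e))
    have hj : j = true ↔ p ∈ I.cI (par e) := by simp [j]
    have h2 := hT' (keepC d e i j)
      (List.mem_append_left _ ((mem_gridL _).2 (Or.inr (Or.inl ⟨d, e, i, j, rfl⟩))))
    rw [keepC, if_neg (Ne.symm hed), mem_impC, lit_iff] at h2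
    have h3 := h2 hj q hq
    rw [lit_iff] at h3
    rw [← h3, hj]

theorem four_le {α : Type} (Q : α → Prop) (h : Cardinal.mk {y // Q y} ≤ ((3 : ℕ) : Cardinal))
    (a b c c' : α) (ha : Q a) (hb : Q b) (hc : Q c) (hc' : Q c')
    (hab : a ≠ b) (hac : a ≠ c) (hac' : a ≠ c') (hbc : b ≠ c) (hbc' : b ≠ c') : c = c' := by
  by_contra hcc
  have hfin : Finite {y // Q y} := by
    rw [← Cardinal.lt_aleph0_iff_finite]
    exact lt_of_le_of_lt h (Cardinal.natCast_lt_aleph0)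
  have := Fintype.ofFinite {y // Q y}
  rw [Cardinal.mk_fintype, Nat.cast_le] at h
  classical
  let F : Finset {y // Q y} := {⟨a, ha⟩, ⟨b, hb⟩, ⟨c, hc⟩, ⟨c', hc'⟩}
  have hF : F.card = 4 := by
    simp [F, *]
  have := Finset.card_le_univ F
  omega

theorem extract (hG : I.Good evenRp) (hR : I.ModelsRH ria) (n : ℕ) (x : I.Dom)
    (hx : x ∈ I.cSem (redC P n)) :
    ∃ M : ℕ → Set Vec, HSat M P ∧ Function.update (0 : Vec) 0 n ∉ M 1 := by
  obtain ⟨⟨hT, hU, hI⟩, hN⟩ := hx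
  have htrans : ∀ r : RN, r.name % 2 = 0 → ∀ x y z, I.rI r.name x y → I.rI r.name y z →
      I.rI r.name x z := fun r hr x y z h1 h2 => hG _ hr h1 h2
  let D := {p : I.Dom // p ∈ I.cSem (tboxC P) ∧ ∀ q, I.rI RN.U.name p q → q ∈ I.cSem (tboxC P)}
  have hstep : ∀ d (p : D), ∃ q : D, ∃ i, I.rI (RN.X d i).name p.1 q.1 ∧
      (i = true ↔ p.1 ∈ I.cI (par d)) ∧ (q.1 ∈ I.cI (par d) ↔ p.1 ∉ I.cI (par d)) ∧
      ∀ e, e ≠ d → (q.1 ∈ I.cI (par e) ↔ p.1 ∈ I.cI (par e)) := by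
    intro d p
    obtain ⟨q, i, h1, h2, h3⟩ := step_exists I P hR d p.1 p.2.1
    exact ⟨⟨q, p.2.2 q h2, fun r hr => p.2.2 r (htrans RN.U rfl _ _ _ h2 hr)⟩, i, h1, h3⟩
  choose s hs using hstep
  have hcomm : ∀ d e x, s d (s e x) = s e (s d x) := by
    intro d e p
    by_cases hde : d = e
    · subst hde; rfl
    obtain ⟨i, a1, a2, a3, a4⟩ := hs d p
    obtain ⟨j, b1, b2, b3, b4⟩ := hs e p
    obtain ⟨j', c1, c2, c3, c4⟩ := hs e (s d p)
    obtain ⟨i', d1, d2, d3, d4⟩ := hs d (s e p)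
    have hjj : j' = j := by
      rw [Bool.eq_iff_iff, c2, b2, a4 e (Ne.symm hde)]
    have hii : i' = i := by
      rw [Bool.eq_iff_iff, d2, a2, b4 d hde]
    subst hjj
    subst hii
    have hS1 : ∀ x y, I.rI (RN.X d i').name x y → I.rI (RN.S d e i' j').name x y := fun x y h =>
      hR _ _ (Relation.ReflTransGen.single
        (Or.inl ((mem_ria _).2 (Or.inr (Or.inl ⟨d, e, i', j', rfl⟩))))) x y h
    have hS2 : ∀ x y, I.rI (RN.X e j').name x y → I.rI (RN.S d e i' j').name x y := fun x y h =>
      hR _ _ (Relation.ReflTransGen.single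
        (Or.inl ((mem_ria _).2 (Or.inr (Or.inr ⟨d, e, i', j', rfl⟩))))) x y h
    have ht := htrans (RN.S d e i' j') (by simp [RN.name])
    have hcard := (mem_bigAnd I _ p.1).1 p.2.1 (cntC d e i' j')
      (List.mem_append_left _ ((mem_gridL _).2 (Or.inr (Or.inr ⟨d, e, i', j', rfl⟩))))
    rw [cntC, if_neg hde, mem_impC, mem_impC, lit_iff, lit_iff] at hcard
    have hcard := hcard a2 b2
    have e1 := a4 e (Ne.symm hde)
    have e2 := b4 d hde
    have e3 := c4 d hde
    have e4 := d4 e (Ne.symm hde)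
    have ne_of : ∀ (u v : D) k, (u.1 ∈ I.cI (par k) ↔ ¬ v.1 ∈ I.cI (par k)) → u.1 ≠ v.1 := by
      intro u v k h1 h2
      rw [h2] at h1
      exact iff_not_self h1
    apply Subtype.ext
    refine four_le _ hcard (s d p).1 (s e p).1 _ _ ⟨?_, trivial⟩ ⟨?_, trivial⟩ ⟨?_, trivial⟩
      ⟨?_, trivial⟩ ?_ ?_ ?_ ?_ ?_
    · exact hS1 _ _ a1
    · exact hS2 _ _ b1
    · exact ht _ _ _ (hS2 _ _ b1) (hS1 _ _ d1)
    · exact ht _ _ _ (hS1 _ _ a1) (hS2 _ _ c1)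
    · exact ne_of _ _ d (by rw [a3, e2])
    · exact ne_of _ _ e (by rw [e1, e4, b3, not_not])
    · exact ne_of _ _ e (by rw [c3, not_not])
    · exact ne_of _ _ d (by rw [d3, not_not])
    · exact ne_of _ _ d (by rw [e2, e3, a3, not_not])
  obtain ⟨g, g0, gs⟩ := grid_of_commute s hcomm ⟨x, hT, hU⟩
  have hall : ∀ (p : I.Dom) (q : D) d C, q.1 = p → p ∈ I.cSem (allX d C) → (s d q).1 ∈ I.cSem C := by
    rintro p q d C rfl h
    obtain ⟨i, a1, _⟩ := hs d q
    cases i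
    · exact h.1 _ a1
    · exact h.2 _ a1
  refine ⟨fun k => {v | (g v).1 ∈ I.cI (prd k)}, ?_, ?_⟩
  · intro r hr
    have hv : ∀ v, (g v).1 ∈ I.cSem (ruleC r) := fun v =>
      (mem_bigAnd I _ _).1 (g v).2.1 _ (List.mem_append_right _ (List.mem_map_of_mem hr))
    have hin : x ∈ I.cSem (initC r) := (mem_bigAnd I _ _).1 hI _ (List.mem_map_of_mem hr)
    cases r with
    | init c =>
      change (g 0).1 ∈ I.cI (prd c)
      rw [g0]; exact hin
    | and a b c =>
      intro v h1 h2
      have := hv v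
      rw [ruleC, mem_impC, mem_impC] at this
      exact this h1 h2
    | up d a c =>
      intro v h1
      have := hv v
      rw [ruleC, mem_impC] at this
      have := hall _ (g v) d _ rfl (this h1)
      rw [← gs] at this
      exact this
    | down d a c =>
      intro v h1
      rcases hv v with h | h
      · have := hall _ (g v) d _ rfl h
        rw [← gs] at this
        exact absurd h1 this
      · exact h
  · have key : ∀ n k, (g (Function.update (0 : Vec) 0 k)).1 ∈ I.cSem (inputC n) →
        (g (Function.update (0 : Vec) 0 (k + n))).1 ∉ I.cI (prd 1) := by
      intro n
      induction n with
      | zero => intro k h; exact h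
      | succ n ih =>
        intro k h
        have := hall _ _ 0 _ rfl h
        rw [← gs, bump_update] at this
        have := ih _ this
        rwa [Nat.add_right_comm] at this
    have h0 : Function.update (0 : Vec) 0 0 = 0 := Function.update_eq_self 0 (0 : Vec)
    have := key n 0 (by rw [h0, g0]; exact hN)
    rwa [Nat.zero_add] at this

end Extract

/-! ### From Horn models to models -/

def XR (d : Fin 12) (i : Bool) (v w : Vec) : Prop :=
  w = bump d v ∧ (i = true ↔ v d % 2 = 1)

def RN.sem : RN → Vec → Vec → Prop
  | .U => fun _ _ => True
  | .X d i => XR d i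
  | .S d e i j => Relation.TransGen (fun v w => XR d i v w ∨ XR e j v w)

def hornI (M : ℕ → Set Vec) : Interp where
  Dom := Vec
  dom_nonempty := ⟨0⟩
  cI := fun a => {v | (∃ d, a = par d ∧ v d % 2 = 1) ∨ ∃ p, a = prd p ∧ v ∈ M p}
  rI := fun r v w => ∃ n : RN, n.name = r ∧ n.sem v w

section Build
variable (M : ℕ → Set Vec)

theorem hornI_role (n : RN) (v w : Vec) : (hornI M).rI n.name v w ↔ n.sem v w := by
  constructor
  · rintro ⟨m, h, h'⟩
    rw [RN.name_inj h] at h'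
    exact h'
  · intro h; exact ⟨n, rfl, h⟩

theorem hornI_rSem (n : RN) (v w : Vec) : (hornI M).rSem n.role v w ↔ n.sem v w :=
  hornI_role M n v w

theorem hornI_par (d : Fin 12) (v : Vec) : v ∈ (hornI M).cI (par d) ↔ v d % 2 = 1 := by
  constructor
  · rintro (⟨e, h, h'⟩ | ⟨p, h, _⟩)
    · have : d = e := Fin.ext (by simp only [par] at h; omega)
      subst this; exact h'
    · simp only [par, prd] at h; omega
  · intro h; exact Or.inl ⟨d, rfl, h⟩

theorem hornI_prd (p : ℕ) (v : Vec) : v ∈ (hornI M).cI (prd p) ↔ v ∈ M p := by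
  constructor
  · rintro (⟨e, h, h'⟩ | ⟨q, h, h'⟩)
    · simp only [par, prd] at h; omega
    · have : p = q := by simp only [prd] at h; omega
      subst this; exact h'
  · intro h; exact Or.inr ⟨p, rfl, h⟩

theorem hornI_lit (d : Fin 12) (i : Bool) (v : Vec) :
    v ∈ (hornI M).cSem (lit d i) ↔ (i = true ↔ v d % 2 = 1) := by
  exact (lit_iff (hornI M) d i v).trans (iff_congr Iff.rfl (hornI_par M d v))

theorem hornI_good : (hornI M).Good evenRp := by
  rintro r hr x y z ⟨n, rfl, h1⟩ ⟨m, hm, h2⟩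
  rw [RN.name_inj hm] at h2
  refine ⟨n, rfl, ?_⟩
  cases n with
  | U => trivial
  | X d i =>
    change (RN.X d i).name % 2 = 0 at hr
    simp only [RN.name] at hr
    omega
  | S d e i j => exact Relation.TransGen.trans h1 h2

theorem hornI_models : (hornI M).ModelsRH ria := by
  have inv_sem : ∀ (R : Role) x y, (hornI M).rSem R.Inv x y ↔ (hornI M).rSem R y x := by
    intro R x y; cases R <;> rfl
  have base : ∀ R S, (R, S) ∈ ria → ∀ x y, (hornI M).rSem R x y → (hornI M).rSem S x y := by
    intro R S h x y
    rw [mem_ria] at h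
    rcases h with ⟨d, i, h⟩ | ⟨d, e, i, j, h⟩ | ⟨d, e, i, j, h⟩ <;>
    · rw [Prod.mk.injEq] at h
      obtain ⟨rfl, rfl⟩ := h
      intro h
      replace h := (hornI_rSem M _ _ _).1 h
      refine (hornI_rSem M _ _ _).2 ?_
      first
      | trivial
      | exact Relation.TransGen.single (Or.inl h)
      | exact Relation.TransGen.single (Or.inr h)
  intro R S h
  induction h with
  | refl => intro x y h; exact h
  | tail _ h ih =>
    intro x y hxy
    have := ih x y hxy
    rcases h with h | h
    · exact base _ _ h x y this
    · have := base _ _ h y x ((inv_sem _ _ _).2 this)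
      exact (inv_sem _ _ _).1 this

theorem bump_comm (d e : Fin 12) (v : Vec) : bump d (bump e v) = bump e (bump d v) := by
  by_cases h : d = e
  · subst h; rfl
  · funext z
    by_cases h1 : z = d <;> by_cases h2 : z = e <;> simp_all [bump, Function.update_apply]

theorem parity_flip (i : Bool) (m : ℕ) (h1 : i = true ↔ m % 2 = 1) :
    ¬ (i = true ↔ (m + 1) % 2 = 1) := by
  rw [h1]; omega

theorem S_succ {d e : Fin 12} (hde : d ≠ e) {i j : Bool} {v w : Vec}
    (hi : i = true ↔ v d % 2 = 1) (hj : j = true ↔ v e % 2 = 1)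
    (h : (RN.S d e i j).sem v w) :
    w = bump d v ∨ w = bump e v ∨ w = bump d (bump e v) := by
  have hd := parity_flip _ _ hi
  have he := parity_flip _ _ hj
  induction h with
  | single h =>
    rcases h with h | h
    · exact Or.inl h.1
    · exact Or.inr (Or.inl h.1)
  | tail _ h ih =>
    rcases ih with rfl | rfl | rfl <;> rcases h with ⟨h, h'⟩ | ⟨h, h'⟩
    · rw [bump_same] at h'; exact absurd h' hd
    · rw [h, bump_comm]; simp
    · rw [h]; simp
    · rw [bump_same] at h'; exact absurd h' he
    · rw [bump_same, bump_ne hde] at h'; exact absurd h' hd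
    · rw [bump_ne (Ne.symm hde), bump_same] at h'; exact absurd h' he

theorem hornI_allX (d : Fin 12) (C : DLConcept) (v : Vec) :
    v ∈ (hornI M).cSem (allX d C) ↔ bump d v ∈ (hornI M).cSem C := by
  constructor
  · intro h
    by_cases hp : v d % 2 = 1
    · exact h.2 _ ((hornI_rSem M _ _ _).2 ⟨rfl, by simp [hp]⟩)
    · exact h.1 _ ((hornI_rSem M _ _ _).2 ⟨rfl, by simp [hp]⟩)
  · intro h
    constructor
    · intro w hw
      obtain ⟨rfl, _⟩ := (hornI_rSem M _ _ _).1 hw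
      exact h
    · intro w hw
      obtain ⟨rfl, _⟩ := (hornI_rSem M _ _ _).1 hw
      exact h

theorem hornI_tbox (P : List HRule) (hM : HSat M P) (v : Vec) :
    v ∈ (hornI M).cSem (tboxC P) := by
  refine (mem_bigAnd (hornI M) _ v).2 ?_
  intro C hC
  rw [List.mem_append, mem_gridL, List.mem_map] at hC
  rcases hC with (⟨d, i, rfl⟩ | ⟨d, e, i, j, rfl⟩ | ⟨d, e, i, j, rfl⟩) | ⟨r, hr, rfl⟩
  · refine (mem_impC (hornI M) _ _ v).2 fun h => ?_
    replace h := (hornI_lit M _ _ _).1 h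
    refine ⟨bump d v, (hornI_rSem M _ _ _).2 ⟨rfl, h⟩, ?_⟩
    refine (hornI_lit M _ _ _).2 ?_
    rw [bump_same]
    have := parity_flip _ _ h
    cases i <;> simp_all
  · unfold keepC; split_ifs with hde
    · trivial
    · refine (mem_impC (hornI M) _ _ v).2 fun h => ?_
      replace h := (hornI_lit M _ _ _).1 h
      intro w hw
      obtain ⟨rfl, _⟩ := (hornI_rSem M _ _ _).1 hw
      refine (hornI_lit M _ _ _).2 ?_
      rwa [bump_ne (Ne.symm hde)]
  · unfold cntC; split_ifs with hde
    · trivial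
    · refine (mem_impC (hornI M) _ _ v).2 fun h1 => ?_
      refine (mem_impC (hornI M) _ _ v).2 fun h2 => ?_
      replace h1 := (hornI_lit M _ _ _).1 h1
      replace h2 := (hornI_lit M _ _ _).1 h2
      have hsub : ({y | (hornI M).rSem (RN.S d e i j).role v y ∧
          y ∈ (hornI M).cSem DLConcept.top} : Set Vec) ⊆
          ({bump d v, bump e v, bump d (bump e v)} : Finset Vec) := by
        intro w hw
        have := S_succ hde h1 h2 ((hornI_rSem M _ _ _).1 hw.1)
        simpa using this
      have hle : Cardinal.mk (({bump d v, bump e v, bump d (bump e v)} : Finset Vec) : Set Vec) ≤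
          ((3 : ℕ) : Cardinal) := by
        rw [Finset.coe_sort_coe, Cardinal.mk_coe_finset]
        exact Nat.cast_le.2 Finset.card_le_three
      exact (Cardinal.mk_le_mk_of_subset hsub).trans hle
  · have := hM r hr
    cases r with
    | init c => trivial
    | and a b c =>
      refine (mem_impC (hornI M) _ _ v).2 fun h1 => ?_
      refine (mem_impC (hornI M) _ _ v).2 fun h2 => ?_
      exact (hornI_prd M _ _).2 (this v ((hornI_prd M _ _).1 h1) ((hornI_prd M _ _).1 h2))
    | up d a c =>
      refine (mem_impC (hornI M) _ _ v).2 fun h1 => ?_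
      refine (hornI_allX M _ _ _).2 ?_
      exact (hornI_prd M _ _).2 (this v ((hornI_prd M _ _).1 h1))
    | down d a c =>
      by_cases h : bump d v ∈ M a
      · exact Or.inr ((hornI_prd M _ _).2 (this v h))
      · refine Or.inl ((hornI_allX M _ _ _).2 ?_)
        intro h'
        exact h ((hornI_prd M _ _).1 h')

theorem build (P : List HRule) (hM : HSat M P) (n : ℕ)
    (hn : Function.update (0 : Vec) 0 n ∉ M 1) : Satisfiable evenRp ria (redC P n) := by
  refine ⟨hornI M, hornI_good M, hornI_models M, (0 : Vec), ⟨hornI_tbox M P hM 0, ?_, ?_⟩, ?_⟩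
  · intro w _; exact hornI_tbox M P hM w
  · refine (mem_bigAnd (hornI M) _ (0 : Vec)).2 ?_
    intro C hC
    obtain ⟨r, hr, rfl⟩ := List.mem_map.1 hC
    have := hM r hr
    cases r with
    | init c => exact (hornI_prd M _ _).2 this
    | and a b c => trivial
    | up d a c => trivial
    | down d a c => trivial
  · have key : ∀ n k, Function.update (0 : Vec) 0 (k + n) ∉ M 1 →
        Function.update (0 : Vec) 0 k ∈ (hornI M).cSem (inputC n) := by
      intro n
      induction n with
      | zero => intro k h h'; exact h ((hornI_prd M _ _).1 h')
      | succ n ih =>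
        intro k h
        refine (hornI_allX M _ _ _).2 ?_
        rw [bump_update]
        apply ih
        rwa [Nat.add_right_comm]
    have h0 : Function.update (0 : Vec) 0 0 = 0 := Function.update_eq_self 0 (0 : Vec)
    have := key n 0 (by rwa [Nat.zero_add])
    rwa [h0] at this

end Build

theorem sat_red_iff {R : Set Vec} {P : List HRule} (h1 : ∀ M, HSat M P → R ⊆ M 1)
    (h2 : ∃ M, HSat M P ∧ M 1 = R) (n : ℕ) :
    Satisfiable evenRp ria (redC P n) ↔ Function.update (0 : Vec) 0 n ∉ R := by
  constructor
  · rintro ⟨I, hG, hR, x, hx⟩ hn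
    obtain ⟨M, hM, hM'⟩ := extract I P hG hR n x hx
    exact hM' (h1 M hM hn)
  · intro hn
    obtain ⟨M, hM, rfl⟩ := h2
    exact build M P hM n hn

theorem inputC_code_primrec : Primrec (fun n => (inputC n).code) := by
  let A := (RN.X 0 false).role.code
  let B := (RN.X 0 true).role.code
  have hstep : Primrec₂ (fun (_ : ℕ) (c : ℕ) =>
      Nat.pair 4 (Nat.pair (Nat.pair 6 (Nat.pair A c)) (Nat.pair 6 (Nat.pair B c)))) := by
    have hc : Primrec (fun p : ℕ × ℕ => p.2) := Primrec.snd
    have hp : ∀ {f g : ℕ × ℕ → ℕ}, Primrec f → Primrec g →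
        Primrec (fun p => Nat.pair (f p) (g p)) := fun hf hg => Primrec₂.natPair.comp hf hg
    exact hp (Primrec.const 4) (hp (hp (Primrec.const 6) (hp (Primrec.const A) hc))
      (hp (Primrec.const 6) (hp (Primrec.const B) hc)))
  refine (Primrec.nat_rec₁ (inputC 0).code hstep).of_eq fun n => ?_
  induction n with
  | zero => rfl
  | succ n ih =>
    change Nat.pair 4 (Nat.pair (Nat.pair 6 (Nat.pair A _)) (Nat.pair 6 (Nat.pair B _))) = _
    rw [ih]
    rfl

/-- **Undecidability of unrestricted SHIN.** Over the fixed,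
effectively encoded signature, there is no computable function deciding
satisfiability of SHIN⁺-concepts w.r.t. role hierarchies. -/
theorem shin_plus_undecidable :
    ¬ ∃ f : ℕ → Bool, Computable f ∧
      ∀ (C : DLConcept) (RIA : List (Role × Role)), C.IsSHINplus →
        (f (Nat.pair C.code (riaCode RIA)) = true ↔ Satisfiable evenRp RIA C) := by
  rintro ⟨f, hf, hspec⟩
  let h : ℕ →. ℕ := fun x => (Denumerable.ofNat Nat.Partrec.Code x).eval 0
  have hh : Nat.Partrec h := by
    rw [← Partrec.nat_iff]
    exact Nat.Partrec.Code.eval_part.comp (Computable.ofNat _) (Computable.const 0)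
  have hdef : Def {v | (h (v 0)).Dom} := by
    refine ((graph_of_partrec hh 0 1 (by decide)).ex 1).of_eq fun v => ?_
    simp [Part.dom_iff_mem]
  obtain ⟨P, h1, h2⟩ := hdef
  have hiff := sat_red_iff h1 (by obtain ⟨M, a, _, b⟩ := h2 ∅; exact ⟨M, a, b⟩)
  have hcode : Computable (fun n => f (Nat.pair (redC P n).code (riaCode ria))) := by
    refine hf.comp ?_
    have : Primrec (fun n => Nat.pair (Nat.pair 4 (Nat.pair (fixedC P).code (inputC n).code))
        (riaCode ria)) :=
      Primrec₂.natPair.comp (Primrec₂.natPair.comp (Primrec.const 4)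
        (Primrec₂.natPair.comp (Primrec.const _) inputC_code_primrec)) (Primrec.const _)
    exact this.to_comp
  refine ComputablePred.halting_problem 0 ?_
  have hnot : ComputablePred fun c : Nat.Partrec.Code => ¬ (c.eval 0).Dom := by
    rw [ComputablePred.computable_iff]
    refine ⟨_, hcode.comp Computable.encode, ?_⟩
    funext c
    have e := (hspec (redC P (Encodable.encode c)) ria (shin_red P _)).trans
      (hiff (Encodable.encode c))
    rw [e]
    simp [h]
  exact hnot.not.of_eq fun c => by simp
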